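/- arXiv:1010.3308 — 2 statements merged into one kernel-verified Lean document; each statement's English description precedes it below -/
import Mathlib

section
/- Let I = [0,1] × [0,1] be the unit square with coordinates (u,v). Let A, B ⊆ I be closed sets such that: every continuous curve γ : [0,1] → I with first coordinate of γ(0) equal to 0 and first coordinate of γ(1) equal to 1 intersects A; and every continuous curve γ : [0,1] → I with second coordinate of γ(0) equal to 0 and second coordinate of γ(1) equal to 1 intersects B. Then A ∩ B ≠ ∅. -/
/-- The unit square `I = [0,1] × [0,1]` in `ℝ²`. -/
def unitSquare : Set (ℝ × ℝ) := Set.Icc (0:ℝ) 1 ×ˢ Set.Icc (0:ℝ) 1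

/-- A continuous angle that starts in `[0,π]` and keeps nonnegative sine stays in `[0,π]`. -/
lemma angle_edge (φ : ℝ → ℝ) (hφ : Continuous φ)
    (hs : ∀ t ∈ Set.Icc (0:ℝ) 1, 0 ≤ Real.sin (φ t))
    (h0 : φ 0 ∈ Set.Icc 0 Real.pi) : φ 1 ∈ Set.Icc 0 Real.pi := by
  have hpi := Real.pi_pos
  constructor
  · by_contra! h
    have hm : max (φ 1) (-(Real.pi / 2)) ∈ Set.Icc (φ 1) (φ 0) :=
      ⟨le_max_left _ _, max_le (h.le.trans h0.1) (by linarith [h0.1])⟩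
    obtain ⟨t, ht, hte⟩ := intermediate_value_Icc' zero_le_one hφ.continuousOn hm
    have h1 := hs t ht
    rw [hte] at h1
    have := Real.sin_neg_of_neg_of_neg_pi_lt (x := max (φ 1) (-(Real.pi / 2)))
      (max_lt h (by linarith)) (lt_max_of_lt_right (by linarith))
    linarith
  · by_contra! h
    have hm : min (φ 1) (3 * Real.pi / 2) ∈ Set.Icc (φ 0) (φ 1) :=
      ⟨le_min (h0.2.trans h.le) (by linarith [h0.2]), min_le_left _ _⟩
    obtain ⟨t, ht, hte⟩ := intermediate_value_Icc zero_le_one hφ.continuousOn hm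
    have h1 := hs t ht
    rw [hte] at h1
    have := Real.sin_pos_of_pos_of_lt_pi (x := min (φ 1) (3 * Real.pi / 2) - Real.pi)
      (by have := lt_min h (by linarith : Real.pi < 3 * Real.pi / 2); linarith)
      (by have := min_le_right (φ 1) (3 * Real.pi / 2); linarith)
    rw [Real.sin_sub_pi] at this
    linarith

/-- Two-dimensional Poincaré–Miranda theorem. -/
lemma miranda (f g : ℝ × ℝ → ℝ) (hf : Continuous f) (hg : Continuous g)
    (hl : ∀ t, 0 ≤ f (0, t)) (hr : ∀ t, f (1, t) ≤ 0)
    (hb : ∀ t, 0 ≤ g (t, 0)) (ht : ∀ t, g (t, 1) ≤ 0) :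
    ∃ x, f x = 0 ∧ g x = 0 := by
  by_contra! hne
  let F : C(ℝ × ℝ, ℂ) := ⟨fun x => ⟨f x, g x⟩, by
    have : (fun x => (⟨f x, g x⟩ : ℂ)) = fun x => (f x : ℂ) + g x * Complex.I := by
      funext x; exact Complex.mk_eq_add_mul_I _ _
    rw [this]; fun_prop⟩
  have hF : ∀ x, F x ≠ 0 := fun x h =>
    hne x (congrArg Complex.re h) (congrArg Complex.im h)
  obtain ⟨L, ⟨hL0, hL⟩, -⟩ := Complex.isCoveringMapOn_exp.existsUnique_continuousMap_lifts
    F (a₀ := ((0 : ℝ), (0 : ℝ))) (Complex.exp_log (hF (0, 0))) (fun x => hF x)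
  let θ : ℝ × ℝ → ℝ := fun x => (L x).im
  have hθ : Continuous θ := Complex.continuous_im.comp L.continuous
  have hexp : ∀ x, Complex.exp (L x) = F x := fun x => congrFun hL x
  have hfx : ∀ x, f x = Real.exp (L x).re * Real.cos (θ x) := fun x => by
    rw [← Complex.exp_re, hexp]; rfl
  have hgx : ∀ x, g x = Real.exp (L x).re * Real.sin (θ x) := fun x => by
    rw [← Complex.exp_im, hexp]; rfl
  have hpi := Real.pi_pos
  have hcl : ∀ t, 0 ≤ Real.cos (θ (0, t)) := fun t =>
    nonneg_of_mul_nonneg_right ((hfx _) ▸ hl t) (Real.exp_pos _)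
  have hcr : ∀ t, Real.cos (θ (1, t)) ≤ 0 := fun t => by
    have := hr t
    rw [hfx] at this
    exact nonpos_of_mul_nonpos_right this (Real.exp_pos _)
  have hsb : ∀ t, 0 ≤ Real.sin (θ (t, 0)) := fun t =>
    nonneg_of_mul_nonneg_right ((hgx _) ▸ hb t) (Real.exp_pos _)
  have hst : ∀ t, Real.sin (θ (t, 1)) ≤ 0 := fun t => by
    have := ht t
    rw [hgx] at this
    exact nonpos_of_mul_nonpos_right this (Real.exp_pos _)
  have h00 : θ (0, 0) = Complex.arg (F (0, 0)) := by
    change (L (0, 0)).im = _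
    rw [hL0, Complex.log_im]
  have h00a : 0 ≤ θ (0, 0) := by rw [h00, Complex.arg_nonneg_iff]; exact hb 0
  have h00b : θ (0, 0) ≤ Real.pi / 2 := by
    rw [h00]
    exact (le_abs_self _).trans (Complex.abs_arg_le_pi_div_two_iff.2 (hl 0))
  -- bottom
  have e1 := angle_edge (fun t => θ (t, 0)) (by fun_prop) (fun t _ => hsb t)
    ⟨h00a, by linarith⟩
  have c1 : Real.pi / 2 ≤ θ (1, 0) := by
    by_contra! h
    have := Real.cos_pos_of_mem_Ioo (x := θ (1, 0)) ⟨by linarith [e1.1], h⟩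
    linarith [hcr 0]
  -- right
  have e2 := angle_edge (fun t => θ (1, t) - Real.pi / 2) (by fun_prop)
    (fun t _ => by rw [Real.sin_sub_pi_div_two]; linarith [hcr t])
    ⟨by linarith, by linarith [e1.2]⟩
  have c2 : Real.pi ≤ θ (1, 1) := by
    by_contra! h
    have := Real.sin_pos_of_pos_of_lt_pi (x := θ (1, 1)) (by linarith [e2.1]) h
    linarith [hst 1]
  -- top
  have e3 := angle_edge (fun t => θ (1 - t, 1) - Real.pi) (by fun_prop)
    (fun t _ => by rw [Real.sin_sub_pi]; linarith [hst (1 - t)])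
    ⟨by simpa using c2, by have := e2.2; simp only [sub_zero]; linarith⟩
  -- left
  have e4 := angle_edge (fun t => θ (0, t) + Real.pi / 2) (by fun_prop)
    (fun t _ => by rw [Real.sin_add_pi_div_two]; exact hcl t)
    ⟨by linarith, by linarith⟩
  have h3 := e3.1
  have h4 := e4.2
  simp only [sub_self] at h3
  linarith

/-- A closed set separating `S` from `T` is the zero set of a function with the right signs. -/
lemma separating_function (C S T : Set (ℝ × ℝ)) (hC : IsClosed C) (hCne : C.Nonempty)
    (hsep : ∀ x ∈ S, ∀ y ∈ T, ¬ JoinedIn Cᶜ x y) :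
    ∃ f : ℝ × ℝ → ℝ, Continuous f ∧ (∀ x ∈ S, 0 ≤ f x) ∧ (∀ x ∈ T, f x ≤ 0) ∧
      ∀ x, f x = 0 → x ∈ C := by
  classical
  let U : Set (ℝ × ℝ) := {x | ∃ y ∈ S, JoinedIn Cᶜ y x}
  have hfr : ∀ x ∈ frontier U, x ∈ C := by
    intro x hx
    by_contra hxC
    obtain ⟨ε, hε, hball⟩ := Metric.isOpen_iff.1 hC.isOpen_compl x hxC
    have hj : ∀ y ∈ Metric.ball x ε, ∀ z ∈ Metric.ball x ε, JoinedIn Cᶜ y z := by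
      intro y hy z hz
      exact (((convex_ball x ε).isPathConnected ⟨x, Metric.mem_ball_self hε⟩).joinedIn
        y hy z hz).mono hball
    have hnhds := Metric.ball_mem_nhds x hε
    rw [frontier_eq_closure_inter_closure] at hx
    obtain ⟨y, hy, w, hw, hwy⟩ := mem_closure_iff_nhds.1 hx.1 _ hnhds
    obtain ⟨z, hz, hzU⟩ := mem_closure_iff_nhds.1 hx.2 _ hnhds
    exact hzU ⟨w, hw, hwy.trans (hj y hy z hz)⟩
  refine ⟨fun x => if x ∈ U then Metric.infDist x C else -Metric.infDist x C, ?_, ?_, ?_, ?_⟩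
  · refine Continuous.if ?_ (Metric.continuous_infDist_pt C) (Metric.continuous_infDist_pt C).neg
    intro x hx
    rw [Metric.infDist_zero_of_mem (hfr x hx), neg_zero]
  · intro x hx
    by_cases hxC : x ∈ C
    · simp [Metric.infDist_zero_of_mem hxC]
    · have : x ∈ U := ⟨x, hx, JoinedIn.refl hxC⟩
      simp only [this, if_true]
      exact Metric.infDist_nonneg
  · intro x hx
    have : x ∉ U := fun ⟨y, hy, hyx⟩ => hsep y hy x hx hyx
    simp only [this, if_false]
    linarith [Metric.infDist_nonneg (x := x) (s := C)]
  · intro x hx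
    rw [hC.mem_iff_infDist_zero hCne]
    by_cases h : x ∈ U
    · simpa [h] using hx
    · simpa [h] using hx

/-- The coordinatewise retraction of the plane onto the unit square. -/
noncomputable def clampSquare (x : ℝ × ℝ) : ℝ × ℝ :=
  (max 0 (min 1 x.1), max 0 (min 1 x.2))

lemma continuous_clampSquare : Continuous clampSquare := by
  unfold clampSquare; fun_prop

lemma clampSquare_mem (x : ℝ × ℝ) : clampSquare x ∈ unitSquare := by
  simp [clampSquare, unitSquare]

lemma clampSquare_of_mem {x : ℝ × ℝ} (hx : x ∈ unitSquare) : clampSquare x = x := by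
  obtain ⟨⟨h1, h2⟩, h3, h4⟩ := hx
  simp [clampSquare, h1, h2, h3, h4]

/-- Lemma 11 of the paper: if `A, B` are closed subsets of the unit square `I` such
that every curve in `I` joining the side `u = 0` to the side `u = 1` meets `A`, and
every curve in `I` joining the side `v = 0` to the side `v = 1` meets `B`, then
`A ∩ B ≠ ∅`. -/
theorem square_crossing_sets_intersect
    (A B : Set (ℝ × ℝ)) (hA : IsClosed A) (hB : IsClosed B)
    (hAI : A ⊆ unitSquare) (hBI : B ⊆ unitSquare)
    (hAcross : ∀ γ : ℝ → ℝ × ℝ, ContinuousOn γ (Set.Icc 0 1) →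
      (∀ t ∈ Set.Icc (0:ℝ) 1, γ t ∈ unitSquare) →
      (γ 0).1 = 0 → (γ 1).1 = 1 → ∃ t ∈ Set.Icc (0:ℝ) 1, γ t ∈ A)
    (hBcross : ∀ γ : ℝ → ℝ × ℝ, ContinuousOn γ (Set.Icc 0 1) →
      (∀ t ∈ Set.Icc (0:ℝ) 1, γ t ∈ unitSquare) →
      (γ 0).2 = 0 → (γ 1).2 = 1 → ∃ t ∈ Set.Icc (0:ℝ) 1, γ t ∈ B) :
    (A ∩ B).Nonempty := by
  have hAs : ∀ x ∈ {x : ℝ × ℝ | x.1 = 0}, ∀ y ∈ {x : ℝ × ℝ | x.1 = 1},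
      ¬ JoinedIn (clampSquare ⁻¹' A)ᶜ x y := by
    rintro x hx y hy ⟨γ, hγ⟩
    obtain ⟨t, ht, h⟩ := hAcross (fun t => clampSquare (γ.extend t))
      (continuous_clampSquare.comp γ.continuous_extend).continuousOn
      (fun t _ => clampSquare_mem _)
      (by simp [clampSquare, show x.1 = 0 from hx]) (by simp [clampSquare, show y.1 = 1 from hy])
    rw [Path.extend_apply γ ht] at h
    exact hγ _ h
  have hBs : ∀ x ∈ {x : ℝ × ℝ | x.2 = 0}, ∀ y ∈ {x : ℝ × ℝ | x.2 = 1},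
      ¬ JoinedIn (clampSquare ⁻¹' B)ᶜ x y := by
    rintro x hx y hy ⟨γ, hγ⟩
    obtain ⟨t, ht, h⟩ := hBcross (fun t => clampSquare (γ.extend t))
      (continuous_clampSquare.comp γ.continuous_extend).continuousOn
      (fun t _ => clampSquare_mem _)
      (by simp [clampSquare, show x.2 = 0 from hx]) (by simp [clampSquare, show y.2 = 1 from hy])
    rw [Path.extend_apply γ ht] at h
    exact hγ _ h
  have hAne : (clampSquare ⁻¹' A).Nonempty := by
    obtain ⟨t, -, h⟩ := hAcross (fun t => clampSquare (t, 0))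
      (continuous_clampSquare.comp (by fun_prop)).continuousOn
      (fun t _ => clampSquare_mem _) (by simp [clampSquare]) (by simp [clampSquare])
    exact ⟨_, h⟩
  have hBne : (clampSquare ⁻¹' B).Nonempty := by
    obtain ⟨t, -, h⟩ := hBcross (fun t => clampSquare (0, t))
      (continuous_clampSquare.comp (by fun_prop)).continuousOn
      (fun t _ => clampSquare_mem _) (by simp [clampSquare]) (by simp [clampSquare])
    exact ⟨_, h⟩
  obtain ⟨f, hf, hfl, hfr, hfA⟩ := separating_function _ _ _
    (hA.preimage continuous_clampSquare) hAne hAs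
  obtain ⟨g, hg, hgb, hgt, hgB⟩ := separating_function _ _ _
    (hB.preimage continuous_clampSquare) hBne hBs
  obtain ⟨x, hfx, hgx⟩ := miranda f g hf hg (fun t => hfl _ rfl) (fun t => hfr _ rfl)
    (fun t => hgb _ rfl) (fun t => hgt _ rfl)
  exact ⟨clampSquare x, hfA x hfx, hgB x hgx⟩
end

section
/- Let n ≥ 3 and consider Euclidean space ℝⁿ with coordinates (x₁,…,xₙ); for x ∈ ℝⁿ write x' = (x₁,x₂) and x'' = (x₃,…,xₙ), and let G = {x ∈ ℝⁿ : x'' = 0} be the coordinate plane of x'. Let D be a linear hyperplane of ℝⁿ (a subspace of dimension n−1) such that D ∩ G = {x ∈ G : x₂ = 0}. Then for any b > 0 there exists c > 0 such that for every x = (x', x'') ∈ D, either |x₂| ≤ b|x₁| or |x''| ≥ c|x'|. -/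
open Module

/-- Proposition 1 of the paper. In `ℝⁿ` (`n ≥ 3`) with coordinates `(x₁, …, xₙ)`,
write `x' = (x₁, x₂)` and `x'' = (x₃, …, xₙ)`, and let `G = {x : x'' = 0}` be the
coordinate plane of `x'`.  If `D` is a linear hyperplane with `D ∩ G = {x ∈ G : x₂ = 0}`,
then for any `b > 0` there is `c > 0` such that every `x ∈ D` satisfies
`|x₂| ≤ b |x₁|` or `|x''| ≥ c |x'|`. -/
theorem hyperplane_cone_alternative
    (n : ℕ) (hn : 3 ≤ n)
    (D : Submodule ℝ (EuclideanSpace ℝ (Fin n)))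
    (hD : finrank ℝ D = n - 1)
    (hDG : (D : Set (EuclideanSpace ℝ (Fin n))) ∩
        {x | ∀ i : Fin n, 2 ≤ (i : ℕ) → x i = 0} =
      {x | (∀ i : Fin n, 2 ≤ (i : ℕ) → x i = 0) ∧ x ⟨1, by omega⟩ = 0}) :
    ∀ b : ℝ, 0 < b → ∃ c : ℝ, 0 < c ∧ ∀ x ∈ D,
      |x ⟨1, by omega⟩| ≤ b * |x ⟨0, by omega⟩| ∨
      Real.sqrt (∑ i : Fin n, if 2 ≤ (i : ℕ) then (x i) ^ 2 else 0) ≥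
        c * Real.sqrt ((x ⟨0, by omega⟩) ^ 2 + (x ⟨1, by omega⟩) ^ 2) := by
  intro b hb
  set i0 : Fin n := ⟨0, by omega⟩ with hi0
  set i1 : Fin n := ⟨1, by omega⟩ with hi1
  have h01 : i0 ≠ i1 := by simp [hi0, hi1]
  let S : EuclideanSpace ℝ (Fin n) → ℝ :=
    fun x => ∑ i : Fin n, if 2 ≤ (i : ℕ) then (x i) ^ 2 else 0
  have hSnn : ∀ x, 0 ≤ S x := fun x => Finset.sum_nonneg (fun i _ => by split_ifs <;> positivity)
  have hScont : Continuous S := by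
    refine continuous_finsetSum _ (fun i _ => ?_)
    split_ifs
    · fun_prop
    · exact continuous_const
  have hSsmul : ∀ (t : ℝ) x, S (t • x) = t ^ 2 * S x := by
    intro t x
    simp only [S, Finset.mul_sum]
    refine Finset.sum_congr rfl (fun i _ => ?_)
    split_ifs
    · simp [mul_pow]
    · simp
  have hS0 : ∀ x, S x = 0 → ∀ i : Fin n, 2 ≤ (i : ℕ) → x i = 0 := by
    intro x hx i hi
    have h := (Finset.sum_eq_zero_iff_of_nonneg
      (fun i _ => by split_ifs <;> positivity)).1 hx i (Finset.mem_univ i)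
    rw [if_pos hi] at h
    exact pow_eq_zero_iff (two_ne_zero) |>.1 h
  have hnorm : ∀ x : EuclideanSpace ℝ (Fin n), (x i0) ^ 2 + (x i1) ^ 2 ≤ ‖x‖ ^ 2 := by
    intro x
    rw [EuclideanSpace.real_norm_sq_eq, ← Finset.sum_pair (f := fun i => x i ^ 2) h01]
    exact Finset.sum_le_sum_of_subset_of_nonneg (Finset.subset_univ _)
      (fun i _ _ => sq_nonneg _)
  let K : Set (EuclideanSpace ℝ (Fin n)) :=
    Metric.sphere 0 1 ∩ ((D : Set (EuclideanSpace ℝ (Fin n))) ∩ {x | b * |x i0| ≤ |x i1|})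
  have hK : IsCompact K := by
    refine (isCompact_sphere _ _).inter_right ((D.closed_of_finiteDimensional).inter ?_)
    exact isClosed_le (by fun_prop) (by fun_prop)
  have hpos : ∀ x ∈ K, 0 < S x := by
    rintro x ⟨hx1, hxD, hxb⟩
    refine lt_of_le_of_ne (hSnn x) (fun h => ?_)
    have hG := hS0 x h.symm
    have hx : x ∈ (D : Set (EuclideanSpace ℝ (Fin n))) ∩
        {x | ∀ i : Fin n, 2 ≤ (i : ℕ) → x i = 0} := ⟨hxD, hG⟩
    rw [hDG] at hx
    have h1 : x i1 = 0 := hx.2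
    have h0 : x i0 = 0 := by
      have : b * |x i0| ≤ |x i1| := hxb
      rw [h1, abs_zero] at this
      have h2 : |x i0| ≤ 0 := by
        by_contra hc
        push Not at hc
        nlinarith [mul_pos hb hc]
      exact abs_nonpos_iff.1 h2
    have hz : x = 0 := by
      ext i
      by_cases hi : 2 ≤ (i : ℕ)
      · simpa using hG i hi
      · have : i = i0 ∨ i = i1 := by
          simp only [hi0, hi1, Fin.ext_iff]; omega
        rcases this with rfl | rfl
        · simpa using h0
        · simpa using h1
    simp [hz] at hx1
  obtain ⟨m, hm, hmK⟩ := hK.exists_forall_le' hScont.continuousOn hpos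
  refine ⟨Real.sqrt m, Real.sqrt_pos.2 hm, fun x hx => ?_⟩
  rcases le_total (|x i1|) (b * |x i0|) with h | h
  · exact Or.inl h
  right
  rw [ge_iff_le, ← Real.sqrt_mul hm.le]
  apply Real.sqrt_le_sqrt
  change m * _ ≤ S x
  by_cases hx0 : x = 0
  · subst hx0
    simpa using hSnn 0
  have hn0 : 0 < ‖x‖ := norm_pos_iff.2 hx0
  have hy : ‖x‖⁻¹ • x ∈ K := by
    refine ⟨?_, D.smul_mem _ hx, ?_⟩
    · simp [norm_smul, hn0.ne']
    · have := mul_le_mul_of_nonneg_left h (inv_pos.2 hn0).le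
      simp only [Set.mem_setOf_eq, PiLp.smul_apply, smul_eq_mul, abs_mul, abs_inv, abs_norm]
      linarith
  have h3 := hmK _ hy
  rw [hSsmul] at h3
  have h4 : m * ‖x‖ ^ 2 ≤ S x := by
    have := mul_le_mul_of_nonneg_right h3 (sq_nonneg ‖x‖)
    have e : (‖x‖⁻¹) ^ 2 * S x * ‖x‖ ^ 2 = S x := by field_simp
    linarith
  exact (mul_le_mul_of_nonneg_left (hnorm x) hm.le).trans h4
end
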